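/- arXiv:2604.25556 — 2 statements merged into one kernel-verified Lean document; each statement's English description precedes it below -/
import Mathlib

section
/- Let H be a finite simple graph with vertex set [n], let K = {x ∈ ℝ^n : Ax ≥ b} be a polyhedron (with the bound constraints among its rows) such that K ⊆ FRAC(H), let U ⊆ V(H), and set r = α(H[U]). If y ∈ LAS_r(K) and x is its singleton projection (x_v = y_{{v}}), then Σ_{v ∈ U} x_v ≤ r. -/
/-!
Statement 1 (rank-closure lemma).

If `K = {x : Ax ≥ b} ⊆ FRAC(H)` (bound rows included), `U ⊆ V(H)`, `r = α(H[U])`, and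
`y ∈ LAS_r(K)`, then the singleton projection `x` of `y` satisfies `∑_{v ∈ U} x_v ≤ r`.
-/

open Finset

noncomputable def momentMatrix {ι : Type} [DecidableEq ι] (t : ℕ) (y : Finset ι → ℝ) :
    Matrix {I : Finset ι // I.card ≤ t} {I : Finset ι // I.card ≤ t} ℝ :=
  fun I J => y (I.1 ∪ J.1)

noncomputable def slackMatrix {ι κ : Type} [DecidableEq ι] [Fintype ι] (t : ℕ)
    (A : κ → ι → ℝ) (b : κ → ℝ) (ℓ : κ) (y : Finset ι → ℝ) :
    Matrix {I : Finset ι // I.card ≤ t} {I : Finset ι // I.card ≤ t} ℝ :=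
  fun I J => (∑ i : ι, A ℓ i * y (I.1 ∪ J.1 ∪ {i})) - b ℓ * y (I.1 ∪ J.1)

def LAS {ι κ : Type} [DecidableEq ι] [Fintype ι] (t : ℕ) (A : κ → ι → ℝ) (b : κ → ℝ) :
    Set (Finset ι → ℝ) :=
  {y | y ∅ = 1 ∧ (momentMatrix t y).PosSemidef ∧ ∀ ℓ : κ, (slackMatrix t A b ℓ y).PosSemidef}

/-- `s` is an independent (stable) set of `H`. -/
def IsIndep {E : Type} (H : SimpleGraph E) (s : Finset E) : Prop :=
  ∀ u ∈ s, ∀ v ∈ s, u ≠ v → ¬ H.Adj u v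

/-- `α(H[U])`: the maximum size of an independent set of `H` contained in `U`. -/
noncomputable def alphaOn {E : Type} (H : SimpleGraph E) (U : Finset E) : ℕ :=
  sSup {k | ∃ s : Finset E, s ⊆ U ∧ IsIndep H s ∧ s.card = k}

/-!
The zeta matrix `Z` of a finite join-semilattice is invertible, and `(z (a ⊔ b))` factors as
`Z * diagonal p * Zᵀ`, where `p` is the Möbius transform of `z`. Hence this matrix can be positive
semidefinite only if `p ≥ 0`, and then `z` is a nonnegative combination of the indicators `[· ≤ c]`.

A point `y` of the level-`r` relaxation vanishes on every set of size at most `2 * r` that contains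
an edge: conditioning on a set containing one end `u` of the edge gives a point of `K` with
`x u = 1`, so `x v = 0` at the other end `v`. Setting `y` to zero outside the independent subsets
of `U`, which all have size at most `r`, therefore keeps its moment matrix positive semidefinite on
the whole lattice of subsets. So on these subsets `y` is a convex combination of the indicators of
independent subsets `S` of `U`, each of which has `#S ≤ r`.
-/

section PosSemidef

open scoped Matrix

variable {α : Type*} [Finite α] {M : Matrix α α ℝ}

lemma apply_eq_zero_of_diag_eq_zero (hM : M.PosSemidef) {i : α} (hi : M i i = 0) (j : α) :
    M j i = 0 := by
  classical
  have := Fintype.ofFinite α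
  have hker : M *ᵥ Pi.single i 1 = 0 :=
    (hM.dotProduct_mulVec_zero_iff _).1 (by simpa using hi)
  simpa using congrFun hker j

lemma posSemidef_of_submatrix_of_eq_zero {s : Set α}
    (hM : (M.submatrix (↑) (↑) : Matrix s s ℝ).PosSemidef)
    (hzero : ∀ a b, ¬(a ∈ s ∧ b ∈ s) → M a b = 0) : M.PosSemidef := by
  classical
  have := Fintype.ofFinite α
  let P : Matrix s α ℝ := (1 : Matrix α α ℝ).submatrix (↑) id
  have hP_mem (c a : s) : P c a = if c = a then 1 else 0 := by
    simp [P, Matrix.one_apply, Subtype.ext_iff]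
  have hP_notMem (c : s) {a : α} (ha : a ∉ s) : P c a = 0 :=
    Matrix.one_apply_ne fun h : (c : α) = a => ha (h ▸ c.2)
  have hP : Pᴴ * (M.submatrix (↑) (↑) : Matrix s s ℝ) * P = M := by
    ext a b
    by_cases ha : a ∈ s
    · by_cases hb : b ∈ s
      · lift a to s using ha
        lift b to s using hb
        simp [Matrix.mul_apply, hP_mem]
      · simp [Matrix.mul_apply, hP_notMem _ hb, hzero a b fun h => hb h.2]
    · simp [Matrix.mul_apply, hP_notMem _ ha, hzero a b fun h => ha h.1]
  exact hP ▸ hM.conjTranspose_mul_mul_same P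

end PosSemidef

section IncidenceMatrix

open scoped Matrix

variable {R α : Type*} [Ring R]

/-- An element of the incidence algebra of an order, as a matrix indexed by that order. -/
def incidenceMatrix [LE α] (f : IncidenceAlgebra R α) : Matrix α α R :=
  Matrix.of f

lemma incidenceMatrix_one [Preorder α] [DecidableEq α] :
    incidenceMatrix (1 : IncidenceAlgebra R α) = 1 := by
  ext a b
  simp [incidenceMatrix, Matrix.one_apply]

lemma incidenceMatrix_mul [Fintype α] [Preorder α] [LocallyFiniteOrder α]
    (f g : IncidenceAlgebra R α) :
    incidenceMatrix (f * g) = incidenceMatrix f * incidenceMatrix g := by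
  ext a b
  refine sum_subset (subset_univ _) fun c _ hc => ?_
  rw [mem_Icc, not_and_or] at hc
  rcases hc with hac | hcb
  · rw [f.apply_eq_zero_of_not_le hac, zero_mul]
  · rw [g.apply_eq_zero_of_not_le hcb, mul_zero]

variable [Fintype α] [DecidableEq α]

/-- The upward Möbius transform of `z`: the function `p` with `z a = ∑ b ≥ a, p b`. -/
def moebiusTransform [Preorder α] [LocallyFiniteOrder α] (z : α → R) : α → R :=
  incidenceMatrix (IncidenceAlgebra.mu R) *ᵥ z

lemma moebiusTransform_eq_zero [Preorder α] [LocallyFiniteOrder α] {z : α → R} {a : α}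
    (hz : ∀ b, a ≤ b → z b = 0) : moebiusTransform z a = 0 := by
  refine sum_eq_zero fun b _ => ?_
  by_cases hab : a ≤ b
  · rw [hz b hab, mul_zero]
  · exact mul_eq_zero_of_left ((IncidenceAlgebra.mu R).apply_eq_zero_of_not_le hab) _

lemma sum_moebiusTransform [PartialOrder α] [LocallyFiniteOrder α] [DecidableLE α]
    (z : α → R) (a : α) : ∑ b with a ≤ b, moebiusTransform z b = z a := by
  have hinv : incidenceMatrix (IncidenceAlgebra.zeta R) *ᵥ moebiusTransform z = z := by
    rw [moebiusTransform, Matrix.mulVec_mulVec, ← incidenceMatrix_mul,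
      IncidenceAlgebra.zeta_mul_mu, incidenceMatrix_one, Matrix.one_mulVec]
  simpa [Matrix.mulVec, dotProduct, incidenceMatrix, sum_filter] using congrFun hinv a

end IncidenceMatrix

section JoinMatrix

open scoped Matrix

/-- The matrix `(z (a ⊔ b))`; for `α = Finset ι` it is the full, untruncated moment matrix. -/
def joinMatrix {R α : Type*} [SemilatticeSup α] (z : α → R) : Matrix α α R :=
  Matrix.of fun a b => z (a ⊔ b)

variable {α : Type*} [Fintype α] [SemilatticeSup α]

lemma joinMatrix_eq_mul_diagonal_mul {R : Type*} [Ring R] [DecidableEq α] [LocallyFiniteOrder α]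
    [DecidableLE α] (z : α → R) :
    joinMatrix z = incidenceMatrix (IncidenceAlgebra.zeta R) *
      Matrix.diagonal (moebiusTransform z) *
        (incidenceMatrix (IncidenceAlgebra.zeta R))ᵀ := by
  ext a b
  rw [joinMatrix, Matrix.of_apply, ← sum_moebiusTransform z (a ⊔ b), Matrix.mul_apply, sum_filter]
  refine sum_congr rfl fun c _ => ?_
  by_cases ha : a ≤ c <;> by_cases hb : b ≤ c <;> simp [incidenceMatrix, ha, hb]

lemma moebiusTransform_nonneg [DecidableEq α] [LocallyFiniteOrder α] {z : α → ℝ}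
    (hz : (joinMatrix z).PosSemidef) (a : α) : 0 ≤ moebiusTransform z a := by
  classical
  let μ : Matrix α α ℝ := incidenceMatrix (IncidenceAlgebra.mu ℝ)
  let ζ : Matrix α α ℝ := incidenceMatrix (IncidenceAlgebra.zeta ℝ)
  have hμζ : μ * ζ = 1 := by
    rw [← incidenceMatrix_mul, IncidenceAlgebra.mu_mul_zeta, incidenceMatrix_one]
  have hdiag : μ * joinMatrix z * μᴴ = Matrix.diagonal (moebiusTransform z) := by
    calc μ * joinMatrix z * μᴴ
        = (μ * ζ) * Matrix.diagonal (moebiusTransform z) * (μ * ζ)ᵀ := by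
          simp only [joinMatrix_eq_mul_diagonal_mul, Matrix.transpose_mul,
            Matrix.conjTranspose_eq_transpose_of_trivial, Matrix.mul_assoc, ζ]
      _ = Matrix.diagonal (moebiusTransform z) := by simp [hμζ]
  have hpsd := hz.mul_mul_conjTranspose_same μ
  rw [hdiag] at hpsd
  simpa using hpsd.diag_nonneg (i := a)

lemma exists_nonneg_weights_of_posSemidef [DecidableLE α] {𝒥 : Set α} (h𝒥 : IsLowerSet 𝒥)
    {y : α → ℝ}
    (hpsd : ((joinMatrix y).submatrix (↑) (↑) : Matrix 𝒥 𝒥 ℝ).PosSemidef)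
    (hzero : ∀ a ∈ 𝒥, ∀ b ∈ 𝒥, a ⊔ b ∉ 𝒥 → y (a ⊔ b) = 0) :
    ∃ p : α → ℝ, (∀ a, 0 ≤ p a) ∧ (∀ a ∉ 𝒥, p a = 0) ∧
      ∀ a ∈ 𝒥, y a = ∑ b with a ≤ b, p b := by
  classical
  let := Fintype.toLocallyFiniteOrder (α := α)
  have hjoin : (joinMatrix (𝒥.indicator y)).PosSemidef := by
    refine posSemidef_of_submatrix_of_eq_zero (s := 𝒥) ?_ fun a b hab => ?_
    · convert hpsd using 1
      ext a b
      by_cases hab : (a ⊔ b : α) ∈ 𝒥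
      · exact Set.indicator_of_mem hab y
      · exact (Set.indicator_of_notMem hab y).trans (hzero a a.2 b b.2 hab).symm
    · exact Set.indicator_of_notMem
        (fun h => hab ⟨h𝒥 le_sup_left h, h𝒥 le_sup_right h⟩) y
  refine ⟨moebiusTransform (𝒥.indicator y), moebiusTransform_nonneg hjoin, fun a ha => ?_,
    fun a ha => ?_⟩
  · exact moebiusTransform_eq_zero fun b hab =>
      Set.indicator_of_notMem (fun hb => ha (h𝒥 hab hb)) y
  · rw [sum_moebiusTransform, Set.indicator_of_mem ha]

end JoinMatrix

section IndependentSets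

variable {E : Type} {H : SimpleGraph E} {U : Finset E}

/-- The independent sets of `H[U]`, as sets of vertices of `H`. -/
def indepSubsets (H : SimpleGraph E) (U : Finset E) : Set (Finset E) :=
  {S | S ⊆ U ∧ IsIndep H S}

lemma isLowerSet_indepSubsets : IsLowerSet (indepSubsets H U) :=
  fun _ _ hTS hS => ⟨hTS.trans hS.1, fun u hu v hv => hS.2 u (hTS hu) v (hTS hv)⟩

lemma empty_mem_indepSubsets : ∅ ∈ indepSubsets H U :=
  ⟨empty_subset U, by simp [IsIndep]⟩

lemma singleton_mem_indepSubsets {v : E} (hv : v ∈ U) : {v} ∈ indepSubsets H U :=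
  ⟨singleton_subset_iff.2 hv, by simp [IsIndep]⟩

lemma card_le_alphaOn {S : Finset E} (hS : S ∈ indepSubsets H U) : #S ≤ alphaOn H U := by
  refine le_csSup ⟨#U, ?_⟩ ⟨S, hS.1, hS.2, rfl⟩
  rintro _ ⟨T, hTU, -, rfl⟩
  exact card_le_card hTU

lemma exists_adj_of_union_notMem_indepSubsets [DecidableEq E] {S T : Finset E}
    (hS : S ∈ indepSubsets H U) (hT : T ∈ indepSubsets H U) (hST : S ∪ T ∉ indepSubsets H U) :
    ∃ u ∈ S ∪ T, ∃ v ∈ S ∪ T, H.Adj u v := by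
  by_contra! hnone
  exact hST ⟨union_subset hS.1 hT.1, fun u hu v hv _ => hnone u hu v hv⟩

end IndependentSets

/-- The set `K` of solutions of the linear system `A x ≥ b`. -/
def polyhedron {ι κ : Type*} [Fintype ι] (A : κ → ι → ℝ) (b : κ → ℝ) : Set (ι → ℝ) :=
  {x | ∀ ℓ, b ℓ ≤ ∑ i, A ℓ i * x i}

namespace LAS

variable {ι κ : Type} [DecidableEq ι] [Fintype ι] {t : ℕ} {A : κ → ι → ℝ} {b : κ → ℝ}
  {y : Finset ι → ℝ} {u v : ι}

lemma apply_nonneg (hy : y ∈ LAS t A b) {I : Finset ι} (hI : #I ≤ t) : 0 ≤ y I := by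
  simpa [momentMatrix] using hy.2.1.diag_nonneg (i := ⟨I, hI⟩)

lemma apply_union_eq_zero (hy : y ∈ LAS t A b) {I J : Finset ι} (hI : #I ≤ t) (hJ : #J ≤ t)
    (hyI : y I = 0) : y (I ∪ J) = 0 := by
  rw [union_comm]
  exact apply_eq_zero_of_diag_eq_zero hy.2.1 (i := ⟨I, hI⟩) (by simpa [momentMatrix]) ⟨J, hJ⟩

lemma conditioned_mem_polyhedron (hy : y ∈ LAS t A b) {I : Finset ι} (hI : #I ≤ t)
    (hyI : 0 < y I) : (fun i => y (I ∪ {i}) / y I) ∈ polyhedron A b := by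
  intro ℓ
  have hdiag : 0 ≤ ∑ i, A ℓ i * y (I ∪ {i}) - b ℓ * y I := by
    simpa [slackMatrix] using (hy.2.2 ℓ).diag_nonneg (i := ⟨I, hI⟩)
  simp only [← mul_div_assoc]
  rw [← sum_div, le_div_iff₀ hyI]
  exact sub_nonneg.1 hdiag

lemma apply_union_singleton_eq_zero (hy : y ∈ LAS t A b)
    (huv : ∀ x ∈ polyhedron A b, x u = 1 → x v = 0) {I : Finset ι} (hI : #I ≤ t) (hu : u ∈ I) :
    y (I ∪ {v}) = 0 := by
  rcases (apply_nonneg hy hI).eq_or_lt' with hyI | hyI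
  · have ht : 1 ≤ t := (card_pos.2 ⟨u, hu⟩).trans_le hI
    exact apply_union_eq_zero hy hI (by rwa [card_singleton]) hyI
  · have hxu : y (I ∪ {u}) / y I = 1 := by
      rw [union_eq_left.2 (singleton_subset_iff.2 hu), div_self hyI.ne']
    exact (div_eq_zero_iff.1 (huv _ (conditioned_mem_polyhedron hy hI hyI) hxu)).resolve_right
      hyI.ne'

lemma apply_eq_zero_of_mem_of_mem (hy : y ∈ LAS t A b)
    (huv : ∀ x ∈ polyhedron A b, x u = 1 → x v = 0) {S : Finset ι} (hS : #S ≤ 2 * t)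
    (hu : u ∈ S) (hv : v ∈ S) : y S = 0 := by
  have huvS : {u, v} ⊆ S := insert_subset hu (singleton_subset_iff.2 hv)
  -- Halve `S` as `I ∪ (S \ I)` with `u, v ∈ I`; this fails only for `t = 1`, where `S = {u, v}`.
  by_cases hpair : #{u, v} ≤ t
  · obtain ⟨I, huvI, hIS, hI⟩ := exists_subsuperset_card_eq huvS
      (le_min hpair (card_le_card huvS)) (min_le_right t #S)
    have hIt : #I ≤ t := hI.trans_le (min_le_left _ _)
    have hyI : y I = 0 := by
      have hvI : {v} ⊆ I := singleton_subset_iff.2 (huvI (by simp))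
      simpa [union_eq_left.2 hvI] using
        apply_union_singleton_eq_zero hy huv hIt (huvI (mem_insert_self u _))
    have hrest : #(S \ I) ≤ t := by
      rw [card_sdiff_of_subset hIS]
      omega
    simpa [union_sdiff_of_subset hIS] using apply_union_eq_zero hy hIt hrest hyI
  · have hSpos : 0 < #S := card_pos.2 ⟨u, hu⟩
    have hle : #{u, v} ≤ 2 := card_le_two
    have hSuv : S = {u} ∪ {v} := (eq_of_subset_of_card_le huvS (by omega)).symm
    rw [hSuv]
    exact apply_union_singleton_eq_zero hy huv (by rw [card_singleton]; omega)
      (mem_singleton_self u)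

variable {H : SimpleGraph ι} {U : Finset ι}

lemma exists_nonneg_weights_indepSubsets (hy : y ∈ LAS t A b)
    (hadj : ∀ x ∈ polyhedron A b, ∀ u v, H.Adj u v → x u = 1 → x v = 0)
    (ht : alphaOn H U ≤ t) :
    ∃ p : Finset ι → ℝ, (∀ S, 0 ≤ p S) ∧ (∀ S ∉ indepSubsets H U, p S = 0) ∧
      ∀ S ∈ indepSubsets H U, y S = ∑ T with S ⊆ T, p T := by
  have hcard {S : Finset ι} (hS : S ∈ indepSubsets H U) : #S ≤ t := (card_le_alphaOn hS).trans ht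
  refine exists_nonneg_weights_of_posSemidef isLowerSet_indepSubsets ?_ fun S hS T hT hST => ?_
  · exact hy.2.1.submatrix fun S : indepSubsets H U => ⟨S, hcard S.2⟩
  · obtain ⟨u, hu, v, hv, huv⟩ := exists_adj_of_union_notMem_indepSubsets hS hT hST
    have hle : #(S ∪ T) ≤ 2 * t := by
      have := card_union_le S T
      have := hcard hS
      have := hcard hT
      omega
    exact apply_eq_zero_of_mem_of_mem hy (fun x hx => hadj x hx u v huv) hle hu hv

end LAS

theorem rank_closure_general {ι κ : Type} [DecidableEq ι] [Fintype ι] {H : SimpleGraph ι}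
    {A : κ → ι → ℝ} {b : κ → ℝ}
    (hadj : ∀ x ∈ polyhedron A b, ∀ u v, H.Adj u v → x u = 1 → x v = 0)
    {U : Finset ι} {t : ℕ} (ht : alphaOn H U ≤ t) {y : Finset ι → ℝ} (hy : y ∈ LAS t A b) :
    ∑ v ∈ U, y {v} ≤ alphaOn H U := by
  obtain ⟨p, hp_nonneg, hp_zero, hp_sum⟩ := LAS.exists_nonneg_weights_indepSubsets hy hadj ht
  have hp_total : ∑ S, p S = 1 := by
    simpa [hy.1] using (hp_sum ∅ empty_mem_indepSubsets).symm
  calc ∑ v ∈ U, y {v}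
      = ∑ v ∈ U, ∑ S, if v ∈ S then p S else 0 := by
        refine sum_congr rfl fun v hv => ?_
        simp [hp_sum {v} (singleton_mem_indepSubsets hv), sum_filter]
    _ = ∑ S, #(U ∩ S) * p S := by
        rw [sum_comm]
        simp [sum_ite_mem]
    _ ≤ ∑ S, alphaOn H U * p S := by
        refine sum_le_sum fun S _ => ?_
        by_cases hS : S ∈ indepSubsets H U
        · have hle : #(U ∩ S) ≤ alphaOn H U :=
            (card_le_card inter_subset_right).trans (card_le_alphaOn hS)
          exact mul_le_mul_of_nonneg_right (Nat.cast_le.2 hle) (hp_nonneg S)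
        · simp [hp_zero S hS]
    _ = alphaOn H U := by rw [← mul_sum, hp_total, mul_one]

/-- **Rank-closure lemma.** -/
theorem rank_closure {n m : ℕ} (H : SimpleGraph (Fin n))
    (A : Fin m → Fin n → ℝ) (b : Fin m → ℝ)
    (hlb : ∀ i : Fin n, ∃ ℓ : Fin m, (∀ j, A ℓ j = if j = i then 1 else 0) ∧ b ℓ = 0)
    (hub : ∀ i : Fin n, ∃ ℓ : Fin m, (∀ j, A ℓ j = if j = i then -1 else 0) ∧ b ℓ = -1)
    (hfrac : ∀ x : Fin n → ℝ, (∀ ℓ, b ℓ ≤ ∑ i, A ℓ i * x i) →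
      (∀ v, 0 ≤ x v ∧ x v ≤ 1) ∧ ∀ u v, H.Adj u v → x u + x v ≤ 1)
    (U : Finset (Fin n)) (r : ℕ) (hr : r = alphaOn H U)
    (y : Finset (Fin n) → ℝ) (hy : y ∈ LAS r A b) :
    ∑ v ∈ U, y {v} ≤ (r : ℝ) := by
  have hadj (x) (hx : x ∈ polyhedron A b) (u v) (huv : H.Adj u v) (hxu : x u = 1) : x v = 0 := by
    linarith [(hfrac x hx).1 v, (hfrac x hx).2 u v huv]
  exact hr ▸ rank_closure_general hadj hr.ge hy
end

section
/- Let J be an h-perfect finite simple graph and let ℓ ≥ 1 be an integer such that every odd hole of J has length at least 2ℓ+1. Let P(J) = {x ∈ ℝ^{V(J)} : x ≥ 0 and Σ_{v∈Q} x_v ≤ 1 for every clique Q of J} be the clique relaxation of the stable set polytope. Then (2ℓ/(2ℓ+1))·P(J) ⊆ STAB(J), i.e., for every z ∈ P(J) the scaled point (2ℓ/(2ℓ+1))·z lies in STAB(J). -/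
-- The stable set polytope of the induced subgraph `H[T]`, embedded in `ℝ^{V(H)}` by
-- extending by zero: the convex hull of the characteristic vectors of the independent
-- sets of `H` contained in `T`.
open scoped Classical in
noncomputable def STABon {E : Type} (H : SimpleGraph E) (T : Set E) : Set (E → ℝ) :=
  convexHull ℝ {x | ∃ s : Finset E, ↑s ⊆ T ∧ IsIndep H s ∧
    x = fun e => if e ∈ s then (1 : ℝ) else 0}

/-- `H[s]` is an induced cycle of length `m`: the vertices of `s` can be arranged cyclically
(indexed by `ZMod m`) so that exactly the consecutive pairs are adjacent. -/
def IsInducedCycle {E : Type} (H : SimpleGraph E) (s : Finset E) (m : ℕ) : Prop :=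
  3 ≤ m ∧ ∃ f : ZMod m → E, Function.Injective f ∧ (↑s = Set.range f) ∧
    ∀ i j : ZMod m, H.Adj (f i) (f j) ↔ (j = i + 1 ∨ i = j + 1)

/-- The polytope described by nonnegativity, clique inequalities and odd-hole inequalities
of the induced subgraph `H[T]` (embedded in `ℝ^{V(H)}` by extending by zero). -/
def cliqueOddHolePolytope {E : Type} (H : SimpleGraph E) (T : Set E) : Set (E → ℝ) :=
  {x | (∀ e, 0 ≤ x e) ∧ (∀ e, e ∉ T → x e = 0) ∧
    (∀ Q : Finset E, ↑Q ⊆ T → (∀ u ∈ Q, ∀ v ∈ Q, u ≠ v → H.Adj u v) →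
      ∑ e ∈ Q, x e ≤ 1) ∧
    (∀ (s : Finset E) (m : ℕ), ↑s ⊆ T → 5 ≤ m → Odd m → IsInducedCycle H s m →
      ∑ e ∈ s, x e ≤ ((m : ℝ) - 1) / 2)}

/-- The induced subgraph `H[T]` is h-perfect: its stable set polytope is described by
nonnegativity, clique inequalities and odd-hole inequalities. -/
def HPerfectOn {E : Type} (H : SimpleGraph E) (T : Set E) : Prop :=
  STABon H T = cliqueOddHolePolytope H T

/-- The clique relaxation `P(J)` of the stable set polytope: nonnegativity together with
all clique inequalities. -/
def cliqueRelax {E : Type} (J : SimpleGraph E) : Set (E → ℝ) :=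
  {x | (∀ v, 0 ≤ x v) ∧
    ∀ Q : Finset E, (∀ u ∈ Q, ∀ v ∈ Q, u ≠ v → J.Adj u v) → ∑ v ∈ Q, x v ≤ 1}

/-!
Summing the edge inequalities around a cycle of length `m` shows that a point of the clique
relaxation has weight at most `m / 2` on it, whereas the odd hole inequality asks for `(m - 1) / 2`.
Scaling by `(m - 1) / m` closes this gap, and this ratio increases with `m`, so the factor coming
from the shortest odd hole works for all of them.
-/

theorem div_add_one_mul_le_sub_one {K : Type*} [Field K] [LinearOrder K] [IsStrictOrderedRing K]
    {a t : K} (ha : 0 < a + 1) (hat : a + 1 ≤ t) : a / (a + 1) * t ≤ t - 1 := by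
  rw [div_mul_eq_mul_div, div_le_iff₀ ha]
  linarith

theorem two_mul_sum_le_card_of_add_perm_le_one {ι R : Type*} [Fintype ι] [Semiring R]
    [PartialOrder R] [IsOrderedRing R] (σ : Equiv.Perm ι) {x : ι → R}
    (hx : ∀ i, x i + x (σ i) ≤ 1) : 2 * ∑ i, x i ≤ Fintype.card ι :=
  calc 2 * ∑ i, x i = ∑ i, (x i + x (σ i)) := by
        rw [Finset.sum_add_distrib, Equiv.sum_comp σ x, two_mul]
    _ ≤ ∑ _i : ι, 1 := Finset.sum_le_sum fun i _ => hx i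
    _ = Fintype.card ι := by simp

section

variable {E : Type} {J : SimpleGraph E} {y z : E → ℝ}

theorem IsInducedCycle.two_mul_sum_le {s : Finset E} {m : ℕ} (hs : IsInducedCycle J s m)
    (hz : ∀ u v, J.Adj u v → z u + z v ≤ 1) : 2 * ∑ v ∈ s, z v ≤ m := by
  obtain ⟨hm, f, hf, hrange, hadj⟩ := hs
  have : NeZero m := ⟨by lia⟩
  have hmap : s = Finset.univ.map ⟨f, hf⟩ := Finset.coe_injective (by simpa using hrange)
  have hedge (i : ZMod m) : z (f i) + z (f (i + 1)) ≤ 1 :=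
    hz _ _ ((hadj i (i + 1)).2 (Or.inl rfl))
  simpa [hmap] using two_mul_sum_le_card_of_add_perm_le_one (Equiv.addRight 1) hedge

theorem add_le_one_of_mem_cliqueRelax (hz : z ∈ cliqueRelax J) {u v : E} (huv : J.Adj u v) :
    z u + z v ≤ 1 := by
  classical
  have hclique : J.IsClique ({u, v} : Finset E) := by
    simpa [SimpleGraph.isClique_pair] using fun _ => huv
  simpa only [Finset.sum_pair huv.ne] using hz.2 {u, v} fun _ ha _ hb => hclique ha hb

theorem mem_cliqueRelax_of_le (hz : z ∈ cliqueRelax J) (hy : 0 ≤ y) (hyz : y ≤ z) :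
    y ∈ cliqueRelax J :=
  ⟨hy, fun Q hQ => (Finset.sum_le_sum fun v _ => hyz v).trans (hz.2 Q hQ)⟩

theorem mem_cliqueOddHolePolytope_univ_iff :
    y ∈ cliqueOddHolePolytope J Set.univ ↔
      y ∈ cliqueRelax J ∧ ∀ (s : Finset E) (m : ℕ), 5 ≤ m → Odd m → IsInducedCycle J s m →
        ∑ v ∈ s, y v ≤ ((m : ℝ) - 1) / 2 := by
  simp [cliqueOddHolePolytope, cliqueRelax, and_assoc]

theorem smul_mem_cliqueOddHolePolytope_univ (hz : z ∈ cliqueRelax J) {c : ℝ} (hc₀ : 0 ≤ c)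
    (hc₁ : c ≤ 1)
    (hc : ∀ (s : Finset E) (m : ℕ), 5 ≤ m → Odd m → IsInducedCycle J s m → c * m ≤ m - 1) :
    c • z ∈ cliqueOddHolePolytope J Set.univ := by
  have hz₀ : 0 ≤ z := hz.1
  refine mem_cliqueOddHolePolytope_univ_iff.2
    ⟨mem_cliqueRelax_of_le hz (smul_nonneg hc₀ hz₀) (smul_le_of_le_one_left hz₀ hc₁), ?_⟩
  intro s m hm hodd hs
  rw [le_div_iff₀' two_pos]
  calc 2 * ∑ v ∈ s, (c • z) v = c * (2 * ∑ v ∈ s, z v) := by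
        simp only [Pi.smul_apply, smul_eq_mul, ← Finset.mul_sum, mul_left_comm]
    _ ≤ c * m := mul_le_mul_of_nonneg_left
        (hs.two_mul_sum_le fun _ _ => add_le_one_of_mem_cliqueRelax hz) hc₀
    _ ≤ m - 1 := hc s m hm hodd hs

end

/-- **Scaling bound for h-perfect graphs** (Proposition `hperfect-scaling`):
if `J` is h-perfect and every odd hole of `J` has length at least `2ℓ+1`, then
`(2ℓ/(2ℓ+1)) · P(J) ⊆ STAB(J)`. -/
theorem hperfect_scaling {E : Type} (J : SimpleGraph E) (ℓ : ℕ) (hℓ : 1 ≤ ℓ)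
    (hhp : HPerfectOn J Set.univ)
    (hholes : ∀ (s : Finset E) (m : ℕ), 5 ≤ m → Odd m → IsInducedCycle J s m →
      2 * ℓ + 1 ≤ m)
    (z : E → ℝ) (hz : z ∈ cliqueRelax J) :
    ((2 * (ℓ : ℝ)) / (2 * (ℓ : ℝ) + 1)) • z ∈ STABon J Set.univ := by
  rw [show STABon J Set.univ = cliqueOddHolePolytope J Set.univ from hhp]
  have hpos : 0 < 2 * (ℓ : ℝ) + 1 := by positivity
  refine smul_mem_cliqueOddHolePolytope_univ hz (by positivity)
    (div_le_one_of_le₀ (lt_add_one _).le hpos.le) fun s m hm hodd hs => ?_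
  exact div_add_one_mul_le_sub_one hpos (mod_cast hholes s m hm hodd hs)
end
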